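/- For f ∈ L¹(V_{n,m}) and Re λ > m - k - 1 (with 1 ≤ m ≤ k ≤ n-1), the integral (𝒞^λ_{m,k} f)(u) = ∫_{V_{n,m}} f(v) |det(u^t v v^t u)|^{λ/2} dv converges for almost all u ∈ V_{n,k}. -/

import Mathlib

open Matrix MeasureTheory

/-- Borel/product measurable structure on real matrices (via `Matrix = Fin n → Fin m → ℝ`). -/
instance matrixMeasurableSpace (n m : ℕ) : MeasurableSpace (Matrix (Fin n) (Fin m) ℝ) :=
  inferInstanceAs (MeasurableSpace (Fin n → Fin m → ℝ))

open scoped ENNReal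

lemma schur (m : ℕ) (M : Matrix (Fin (m+1)) (Fin (m+1)) ℝ) (h : M 0 0 ≠ 0) :
    M.det = M 0 0 * (Matrix.of fun i j : Fin m =>
      M i.succ j.succ - M i.succ 0 * M 0 j.succ / M 0 0).det := by
  set B : Matrix (Fin (m+1)) (Fin (m+1)) ℝ := Matrix.of fun i j =>
    M i j - (if i = 0 then 0 else M i 0 / M 0 0) * M 0 j with hB
  have : M.det = B.det := by
    apply Matrix.det_eq_of_forall_row_eq_smul_add_const (fun i => if i = 0 then 0 else M i 0 / M 0 0) 0
    · simp
    · intro i j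
      simp [hB]
  rw [this, Matrix.det_succ_column_zero, Fin.sum_univ_succ]
  rw [Finset.sum_eq_zero]
  · simp only [Fin.val_zero, pow_zero, one_mul, add_zero]
    congr 2
    · simp [hB]
    · ext i j
      simp [hB, Matrix.submatrix]
      ring
  · intro i _
    have : B i.succ 0 = 0 := by simp [hB]; field_simp; simp
    simp [this]

/-- rank-one reduction -/
lemma proj_step (n : ℕ) (P : Matrix (Fin n) (Fin n) ℝ) (hs : Pᵀ = P) (hi : P * P = P)
    (x : Fin n → ℝ) (hx : x ⬝ᵥ P *ᵥ x ≠ 0) :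
    ∃ P' : Matrix (Fin n) (Fin n) ℝ, P'ᵀ = P' ∧ P' * P' = P' ∧ P'.trace = P.trace - 1 ∧
      ∀ y z, y ⬝ᵥ P' *ᵥ z = y ⬝ᵥ P *ᵥ z - (y ⬝ᵥ P *ᵥ x) * (x ⬝ᵥ P *ᵥ z) / (x ⬝ᵥ P *ᵥ x) := by
  set a := P *ᵥ x with ha
  set s := x ⬝ᵥ a with hsd
  have haP : a ᵥ* P = a := by
    rw [← Matrix.mulVec_transpose, hs, ha, Matrix.mulVec_mulVec, hi]
  have hPa : P *ᵥ a = a := by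
    rw [ha, Matrix.mulVec_mulVec, hi]
  have haa : a ⬝ᵥ a = s := by
    rw [hsd]; nth_rw 1 [ha]
    rw [← Matrix.vecMul_transpose, hs, ← Matrix.dotProduct_mulVec, hPa]
  refine ⟨P - s⁻¹ • Matrix.vecMulVec a a, ?_, ?_, ?_, ?_⟩
  · simp [Matrix.transpose_sub, hs, Matrix.transpose_vecMulVec]
  · rw [Matrix.sub_mul, Matrix.mul_sub, Matrix.mul_sub, hi]
    simp only [Matrix.mul_smul, Matrix.smul_mul, Matrix.mul_vecMulVec, Matrix.vecMulVec_mul, hPa, haP]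
    simp [Matrix.smul_mulVec, Matrix.vecMulVec_mulVec, haa, smul_smul, hx]
  · simp [Matrix.trace_sub, Matrix.trace_smul, Matrix.trace_vecMulVec, haa, hx]
  · intro y z
    have : x ⬝ᵥ P *ᵥ z = a ⬝ᵥ z := by
      rw [Matrix.dotProduct_mulVec, ← Matrix.mulVec_transpose, hs]
    rw [this, Matrix.sub_mulVec, dotProduct_sub, Matrix.smul_mulVec, dotProduct_smul, Matrix.vecMulVec_mulVec]
    simp
    field_simp

def Bset (n : ℕ) : Set (Fin n → ℝ) := {x | x ⬝ᵥ x < 4}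

lemma Bset_open (n : ℕ) : IsOpen (Bset n) := by
  have : Continuous fun x : Fin n → ℝ => x ⬝ᵥ x := by
    unfold dotProduct; fun_prop
  exact isOpen_lt this continuous_const

lemma Bset_coord {n : ℕ} {x : Fin n → ℝ} (hx : x ∈ Bset n) (i : Fin n) : |x i| < 2 := by
  have h : x ⬝ᵥ x < 4 := hx
  have : x i * x i ≤ x ⬝ᵥ x := by
    unfold dotProduct
    exact Finset.single_le_sum (f := fun i => x i * x i) (fun i _ => mul_self_nonneg _) (Finset.mem_univ i)
  exact abs_lt_of_sq_lt_sq (by nlinarith) (by norm_num)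

lemma oneD (a : ℝ) (ha : -1 < a) :
    Integrable (fun t : ℝ => (Set.Ioo (-2:ℝ) 2).indicator (fun t => |t| ^ a) t) volume := by
  rw [integrable_indicator_iff measurableSet_Ioo]
  have h1 : IntervalIntegrable (fun t : ℝ => |t| ^ a) volume 0 2 := by
    refine (intervalIntegral.intervalIntegrable_rpow' (a := 0) (b := 2) ha).congr ?_
    intro t ht
    rw [Set.uIoc_of_le (by norm_num)] at ht
    simp [abs_of_pos ht.1]
  have h2 : IntervalIntegrable (fun t : ℝ => |t| ^ a) volume (-2) 0 := by
    have := h1.comp_sub_left 0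
    simpa using this.symm
  have h3 := (h2.trans h1)
  rw [intervalIntegrable_iff_integrableOn_Ioo_of_le (by norm_num)] at h3
  exact h3

lemma coordBound (n : ℕ) (r : ℝ) (hr : r < 0) (S : Finset (Fin n)) (hS : -(S.card : ℝ) < r) :
    ∫⁻ x in Bset n, ENNReal.ofReal ((∑ i ∈ S, x i ^ 2) ^ (r / 2)) < ⊤ := by
  have hc : 0 < (S.card : ℝ) := by linarith
  set a : ℝ := r / S.card with ha
  have ha1 : -1 < a := by rw [ha, lt_div_iff₀ hc]; linarith
  have hI : Integrable (fun x : Fin n → ℝ => ∏ i,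
      (Set.Ioo (-2:ℝ) 2).indicator (fun t => |t| ^ (if i ∈ S then a else 0)) (x i)) volume := by
    apply Integrable.fintype_prod (f := fun i t => (Set.Ioo (-2:ℝ) 2).indicator (fun t => |t| ^ (if i ∈ S then a else 0)) t)
    intro i
    apply oneD
    split_ifs <;> linarith
  refine lt_of_le_of_lt ?_ (hI.restrict (s := Bset n)).lintegral_lt_top
  have hne : ∀ᵐ x : Fin n → ℝ, ∀ i, x i ≠ 0 := by
    rw [ae_all_iff]
    intro i
    have h0 : ∀ᵐ t : ℝ, t ≠ 0 := by simp [ae_iff]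
    exact (Measure.tendsto_eval_ae_ae (μ := fun _ : Fin n => (volume : Measure ℝ)) (i := i)).eventually h0
  refine lintegral_mono_ae ?_
  filter_upwards [ae_restrict_of_ae hne, ae_restrict_mem (Bset_open n).measurableSet] with x hx hxB
  apply ENNReal.ofReal_le_ofReal
  have e1 : ∀ i, (Set.Ioo (-2:ℝ) 2).indicator (fun t => |t| ^ (if i ∈ S then a else 0)) (x i)
      = if i ∈ S then |x i| ^ a else 1 := by
    intro i
    rw [Set.indicator_of_mem (Set.mem_Ioo.2 (abs_lt.1 (Bset_coord hxB i)))]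
    split_ifs <;> simp
  simp only [e1]
  rw [Finset.prod_ite_mem, Finset.univ_inter]
  set s := ∑ i ∈ S, x i ^ 2
  have hs0 : ∀ i ∈ S, x i ^ 2 ≤ s := fun i hi =>
    Finset.single_le_sum (f := fun i => x i ^ 2) (fun i _ => sq_nonneg _) hi
  have hsn : 0 ≤ s := Finset.sum_nonneg fun i _ => sq_nonneg _
  have e2 : s ^ (r/2) = ∏ i ∈ S, s ^ (a / 2) := by
    rw [Finset.prod_const, ← Real.rpow_natCast, ← Real.rpow_mul hsn]
    congr 1
    rw [ha]; field_simp
  rw [e2]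
  apply Finset.prod_le_prod
  · intro i _; positivity
  · intro i hi
    have hp : 0 < x i ^ 2 := by have := hx i; positivity
    calc s ^ (a/2) ≤ (x i ^ 2) ^ (a/2) := by
          apply Real.rpow_le_rpow_of_nonpos hp (hs0 i hi)
          have : a ≤ 0 := div_nonpos_of_nonpos_of_nonneg hr.le hc.le
          linarith
      _ = |x i| ^ a := by
          rw [← sq_abs, ← Real.rpow_natCast, ← Real.rpow_mul (abs_nonneg _)]
          congr 1; push_cast; ring

lemma orth_mp (n : ℕ) (U : Matrix (Fin n) (Fin n) ℝ) (hU : Uᵀ * U = 1) :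
    MeasurePreserving (fun x : Fin n → ℝ => U *ᵥ x) volume volume := by
  have hd : U.det * U.det = 1 := by
    have := congrArg Matrix.det hU
    simpa using this
  have hd0 : U.det ≠ 0 := by rintro h; simp [h] at hd
  have habs : |U.det⁻¹| = 1 := by
    have : |U.det| * |U.det| = 1 := by rw [← abs_mul, hd, abs_one]
    rw [abs_inv]
    have : |U.det| = 1 := by nlinarith [abs_nonneg U.det]
    simp [this]
  refine ⟨(Continuous.matrix_mulVec continuous_const continuous_id).measurable, ?_⟩
  have := Real.map_matrix_volume_pi_eq_smul_volume_pi hd0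
  rw [habs, ENNReal.ofReal_one, one_smul] at this
  exact this

lemma base (n : ℕ) (d r : ℝ) (hr : r < 0) (hd : -d < r) :
    ∃ C : ℝ≥0∞, C < ⊤ ∧ ∀ P : Matrix (Fin n) (Fin n) ℝ, Pᵀ = P → P * P = P → d ≤ P.trace →
      ∫⁻ x in Bset n, ENNReal.ofReal ((x ⬝ᵥ P *ᵥ x) ^ (r / 2)) ≤ C := by
  classical
  refine ⟨∑ S : Finset (Fin n) with d ≤ (S.card : ℝ),
    ∫⁻ x in Bset n, ENNReal.ofReal ((∑ i ∈ S, x i ^ 2) ^ (r / 2)), ?_, ?_⟩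
  · rw [ENNReal.sum_lt_top]
    intro S hS
    apply coordBound n r hr S
    have := (Finset.mem_filter.1 hS).2
    linarith
  intro P hs hi ht
  have hH : P.IsHermitian := by
    rw [Matrix.IsHermitian, Matrix.conjTranspose_eq_transpose_of_trivial, hs]
  set U : Matrix (Fin n) (Fin n) ℝ := hH.eigenvectorUnitary.1 with hUdef
  have hU1 : Uᵀ * U = 1 := by
    have := Unitary.coe_star_mul_self hH.eigenvectorUnitary
    simpa [Matrix.star_eq_conjTranspose] using this
  have hsp : P = U * diagonal hH.eigenvalues * Uᵀ := by
    have := hH.spectral_theorem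
    rw [Unitary.conjStarAlgAut_apply] at this
    simpa [Matrix.star_eq_conjTranspose, Function.comp_def] using this
  have hev : ∀ i, hH.eigenvalues i = 0 ∨ hH.eigenvalues i = 1 := by
    have : diagonal hH.eigenvalues * diagonal hH.eigenvalues = diagonal hH.eigenvalues := by
      have hD : diagonal hH.eigenvalues = Uᵀ * P * U := by
        calc _ = (Uᵀ * U) * diagonal hH.eigenvalues * (Uᵀ * U) := by simp [hU1]
          _ = Uᵀ * (U * diagonal hH.eigenvalues * Uᵀ) * U := by simp only [Matrix.mul_assoc]
          _ = _ := by rw [← hsp]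
      have hU2 : U * Uᵀ = 1 := mul_eq_one_comm.1 hU1
      rw [hD]
      calc _ = Uᵀ * (P * (U * Uᵀ) * P) * U := by simp only [Matrix.mul_assoc]
        _ = _ := by rw [hU2, Matrix.mul_one, hi]
    intro i
    rw [Matrix.diagonal_mul_diagonal] at this
    have h2 := congrFun (Matrix.diagonal_injective this) i
    rcases eq_or_ne (hH.eigenvalues i) 0 with h | h
    · left; exact h
    · right; exact mul_left_cancel₀ h (by linarith)
  set S : Finset (Fin n) := Finset.univ.filter fun i => hH.eigenvalues i = 1 with hSd
  have hev' : ∀ i, hH.eigenvalues i = if i ∈ S then 1 else 0 := by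
    intro i
    rcases hev i with h | h <;> simp [hSd, h]
  have htr : P.trace = S.card := by
    rw [hH.trace_eq_sum_eigenvalues]
    simp only [hev']
    simp
  have hq : ∀ x, x ⬝ᵥ P *ᵥ x = ∑ i ∈ S, ((Uᵀ *ᵥ x) i) ^ 2 := by
    intro x
    rw [hsp, ← Matrix.mulVec_mulVec, ← Matrix.mulVec_mulVec, Matrix.dotProduct_mulVec,
      ← Matrix.mulVec_transpose]
    simp only [dotProduct, Matrix.mulVec_diagonal, hev']
    rw [← Finset.sum_filter_add_sum_filter_not Finset.univ (fun i => i ∈ S)]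
    rw [Finset.sum_congr rfl (g := fun i => ((Uᵀ *ᵥ x) i) ^ 2), Finset.sum_eq_zero (s := Finset.univ.filter fun i => ¬ i ∈ S)]
    · simp
    · intro i hi'
      simp [(Finset.mem_filter.1 hi').2]
    · intro i hi'
      simp only [(Finset.mem_filter.1 hi').2, if_true]; ring
  have hU3 : Uᵀᵀ * Uᵀ = 1 := by rw [Matrix.transpose_transpose]; exact mul_eq_one_comm.1 hU1
  have hmp := orth_mp n Uᵀ hU3
  have hpre : (fun x : Fin n → ℝ => Uᵀ *ᵥ x) ⁻¹' Bset n = Bset n := by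
    ext x
    simp only [Bset, Set.mem_preimage, Set.mem_ofPred_eq]
    rw [Matrix.dotProduct_mulVec, ← Matrix.mulVec_transpose, Matrix.mulVec_mulVec, hU3,
      Matrix.one_mulVec]
  have hmeas : Measurable fun x : Fin n → ℝ => ENNReal.ofReal ((∑ i ∈ S, x i ^ 2) ^ (r / 2)) := by
    fun_prop
  have key : ∫⁻ x in Bset n, ENNReal.ofReal ((x ⬝ᵥ P *ᵥ x) ^ (r / 2))
      = ∫⁻ x in Bset n, ENNReal.ofReal ((∑ i ∈ S, x i ^ 2) ^ (r / 2)) := by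
    have h := (hmp.restrict_preimage (Bset_open n).measurableSet).lintegral_comp hmeas
    rw [hpre] at h
    rw [← h]
    simp only [hq]
  rw [key]
  exact Finset.single_le_sum (f := fun S : Finset (Fin n) => ∫⁻ x in Bset n, ENNReal.ofReal ((∑ i ∈ S, x i ^ 2) ^ (r / 2))) (fun _ _ => zero_le) (by
    simp only [Finset.mem_filter, Finset.mem_univ, true_and]; rw [← htr]; exact ht)

lemma quad_eq (n : ℕ) (P : Matrix (Fin n) (Fin n) ℝ) (hs : Pᵀ = P) (hi : P * P = P)
    (x : Fin n → ℝ) : x ⬝ᵥ P *ᵥ x = (P *ᵥ x) ⬝ᵥ (P *ᵥ x) := by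
  nth_rw 2 [← Matrix.vecMul_transpose]
  rw [hs, ← Matrix.dotProduct_mulVec, Matrix.mulVec_mulVec, hi]

lemma gram_nonneg (n : ℕ) (P : Matrix (Fin n) (Fin n) ℝ) (hs : Pᵀ = P) (hi : P * P = P)
    (m : ℕ) (y : Fin m → Fin n → ℝ) : 0 ≤ (Matrix.of fun i j => y i ⬝ᵥ P *ᵥ y j).det := by
  set A : Matrix (Fin n) (Fin m) ℝ := Matrix.of fun a i => (P *ᵥ y i) a with hA
  have : (Matrix.of fun i j => y i ⬝ᵥ P *ᵥ y j) = Aᴴ * A := by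
    ext i j
    have : (Aᴴ * A) i j = (P *ᵥ y i) ⬝ᵥ (P *ᵥ y j) := by
      simp [Matrix.mul_apply, dotProduct, hA]
    rw [this]
    nth_rw 1 [← Matrix.vecMul_transpose]
    rw [hs, ← Matrix.dotProduct_mulVec, Matrix.mulVec_mulVec, hi]
    rfl
  rw [this]
  exact (Matrix.posSemidef_conjTranspose_mul_self A).det_nonneg

lemma ind (n : ℕ) (d r : ℝ) (hr : r < 0) (C : ℝ≥0∞)
    (hC : ∀ P : Matrix (Fin n) (Fin n) ℝ, Pᵀ = P → P * P = P → d ≤ P.trace →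
      ∫⁻ x in Bset n, ENNReal.ofReal ((x ⬝ᵥ P *ᵥ x) ^ (r / 2)) ≤ C) (m : ℕ) :
    ∀ P : Matrix (Fin n) (Fin n) ℝ, Pᵀ = P → P * P = P → (m : ℝ) - 1 + d ≤ P.trace →
      ∫⁻ x : Fin m → Fin n → ℝ, ENNReal.ofReal
        ((Matrix.of fun i j => x i ⬝ᵥ P *ᵥ x j).det ^ (r / 2))
        ∂(Measure.pi fun _ => volume.restrict (Bset n)) ≤ C ^ m := by
  induction m with
  | zero =>
    intro P _ _ _
    simp
  | succ m ih =>
    intro P hs hi ht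
    push_cast at ht
    have hr2 : r / 2 ≠ 0 := by linarith
    set β : Measure (Fin n → ℝ) := volume.restrict (Bset n) with hβ
    have hmp := (measurePreserving_piFinSuccAbove (fun _ : Fin (m+1) => β) 0).symm
    rw [← hmp.lintegral_comp_emb (MeasurableEquiv.measurableEmbedding _)]
    have hcont : Continuous fun x : Fin (m+1) → Fin n → ℝ =>
        (Matrix.of fun i j => x i ⬝ᵥ P *ᵥ x j).det := by
      apply Continuous.matrix_det
      refine continuous_matrix fun i j => ?_
      simp only [Matrix.of_apply, dotProduct, Matrix.mulVec]
      fun_prop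
    rw [lintegral_prod]
    swap
    · refine Measurable.aemeasurable ?_
      refine Measurable.comp (g := fun x : Fin (m+1) → Fin n → ℝ => ENNReal.ofReal
        ((Matrix.of fun i j => x i ⬝ᵥ P *ᵥ x j).det ^ (r / 2))) ?_ (MeasurableEquiv.measurable _)
      have := hcont.measurable
      fun_prop
    calc _ ≤ ∫⁻ x, ENNReal.ofReal ((x ⬝ᵥ P *ᵥ x) ^ (r / 2)) * C ^ m ∂β := by
          refine lintegral_mono fun x => ?_
          have hx0 : 0 ≤ x ⬝ᵥ P *ᵥ x := by
            rw [quad_eq n P hs hi, ]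
            exact Finset.sum_nonneg fun i _ => mul_self_nonneg _
          rcases eq_or_ne (x ⬝ᵥ P *ᵥ x) 0 with h0 | h0
          · have hz : P *ᵥ x = 0 := by
              rw [quad_eq n P hs hi] at h0
              exact dotProduct_self_eq_zero.1 h0
            refine le_trans (le_of_eq ?_) zero_le
            rw [lintegral_eq_zero_of_ae_eq_zero]
            refine Filter.Eventually.of_forall fun y => ?_
            have : (Matrix.of fun i j : Fin (m+1) =>
              (MeasurableEquiv.piFinSuccAbove (fun _ : Fin (m+1) => (Fin n → ℝ)) 0).symm (x, y) i ⬝ᵥ P *ᵥ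
                (MeasurableEquiv.piFinSuccAbove (fun _ : Fin (m+1) => (Fin n → ℝ)) 0).symm (x, y) j).det = 0 := by
              apply Matrix.det_eq_zero_of_column_eq_zero 0
              intro i
              simp [MeasurableEquiv.piFinSuccAbove, hz]
            beta_reduce
            rw [this, Real.zero_rpow hr2]; simp
          · obtain ⟨P', hs', hi', ht', hP'⟩ := proj_step n P hs hi x h0
            have := ih P' hs' hi' (by linarith)
            refine le_trans (le_of_eq ?_) (mul_le_mul_right this _)
            rw [← lintegral_const_mul' _ _ ENNReal.ofReal_ne_top]
            refine lintegral_congr fun y => ?_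
            rw [← ENNReal.ofReal_mul (by positivity)]
            congr 1
            rw [schur]
            · simp only [MeasurableEquiv.piFinSuccAbove, MeasurableEquiv.symm_mk, MeasurableEquiv.coe_mk, Matrix.of_apply, Fin.insertNthEquiv, Equiv.symm_symm, Equiv.coe_fn_mk, Fin.insertNth_zero', Fin.cons_zero, Fin.cons_succ]
              simp only [← hP']
              rw [Real.mul_rpow hx0]
              exact gram_nonneg n P' hs' hi' m y
            · simpa [MeasurableEquiv.piFinSuccAbove] using h0
      _ ≤ C ^ (m+1) := by
          rw [lintegral_mul_const, pow_succ']
          · gcongr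
            apply hC P hs hi
            have : (0:ℝ) ≤ m := by positivity
            linarith
          · have : Continuous fun x : Fin n → ℝ => x ⬝ᵥ P *ᵥ x := by
              simp only [dotProduct, Matrix.mulVec]
              fun_prop
            have := this.measurable
            fun_prop

lemma meas_D (n m k : ℕ) : Measurable fun p : Matrix (Fin n) (Fin k) ℝ × Matrix (Fin n) (Fin m) ℝ =>
    (p.2ᵀ * p.1 * p.1ᵀ * p.2).det := by
  have e1 : ∀ a i, Measurable fun p : Matrix (Fin n) (Fin k) ℝ × Matrix (Fin n) (Fin m) ℝ => p.1 a i :=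
    fun a i => (measurable_pi_apply i).comp ((measurable_pi_apply a).comp measurable_fst)
  have e2 : ∀ a i, Measurable fun p : Matrix (Fin n) (Fin k) ℝ × Matrix (Fin n) (Fin m) ℝ => p.2 a i :=
    fun a i => (measurable_pi_apply i).comp ((measurable_pi_apply a).comp measurable_snd)
  simp only [Matrix.det_apply, Matrix.mul_apply, Matrix.transpose_apply]
  fun_prop

lemma meas_D' (n m k : ℕ) {α : Type*} [MeasurableSpace α] (U : α → Matrix (Fin n) (Fin k) ℝ)
    (V : α → Matrix (Fin n) (Fin m) ℝ) (hU : Measurable U) (hV : Measurable V) :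
    Measurable fun p => ((V p)ᵀ * U p * (U p)ᵀ * V p).det := by
  have h := (meas_D n m k).comp (hU.prodMk hV)
  simp only [Function.comp_def] at h
  exact h

lemma meas_DE (n m k : ℕ) (r : ℝ) {α : Type*} [MeasurableSpace α] (U : α → Matrix (Fin n) (Fin k) ℝ)
    (V : α → Matrix (Fin n) (Fin m) ℝ) (hU : Measurable U) (hV : Measurable V) :
    Measurable fun p => ENNReal.ofReal (((V p)ᵀ * U p * (U p)ᵀ * V p).det ^ (r / 2)) := by
  have := meas_D' n m k U V hU hV
  fun_prop

lemma meas_mulLeft (n k : ℕ) (g : Matrix (Fin n) (Fin n) ℝ) :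
    Measurable fun u : Matrix (Fin n) (Fin k) ℝ => g * u := by
  have e1 : ∀ a i, Measurable fun p : Matrix (Fin n) (Fin k) ℝ => p a i :=
    fun a i => (measurable_pi_apply i).comp (measurable_pi_apply a)
  refine measurable_pi_lambda _ fun a => measurable_pi_lambda _ fun i => ?_
  simp only [Matrix.mul_apply]
  fun_prop

lemma ext_basis (n m : ℕ) (h : m ≤ n) (v : Matrix (Fin n) (Fin m) ℝ) (hv : vᵀ * v = 1) :
    ∃ V : Matrix (Fin n) (Fin n) ℝ, Vᵀ * V = 1 ∧ V.submatrix id (Fin.castLE h) = v := by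
  classical
  let w : Fin n → EuclideanSpace ℝ (Fin n) := fun i =>
    if hi : i.1 < m then WithLp.toLp 2 (fun a => v a ⟨i.1, hi⟩) else 0
  have hw : Orthonormal ℝ (({i : Fin n | i.1 < m} : Set (Fin n)).domRestrict w) := by
    rw [orthonormal_iff_ite]
    rintro ⟨i, hi⟩ ⟨j, hj⟩
    have hi' : i.1 < m := hi
    have hj' : j.1 < m := hj
    have := congrFun (congrFun hv ⟨i.1, hi'⟩) ⟨j.1, hj'⟩
    simp only [Matrix.mul_apply, Matrix.transpose_apply, Matrix.one_apply] at this
    simp only [Set.domRestrict_apply, w, hi', hj', dif_pos, PiLp.inner_apply]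
    simp only [Subtype.mk.injEq, Fin.ext_iff] at this ⊢
    rw [← this]
    refine Finset.sum_congr rfl fun a _ => ?_
    simp [mul_comm]
  obtain ⟨b, hb⟩ := hw.exists_orthonormalBasis_extension_of_card_eq (by simp)
  refine ⟨Matrix.of fun a i => b i a, ?_, ?_⟩
  · ext i j
    have := orthonormal_iff_ite.1 b.orthonormal i j
    rw [Matrix.one_apply, ← this]
    simp only [Matrix.mul_apply, PiLp.inner_apply]
    refine Finset.sum_congr rfl fun a _ => ?_
    simp [mul_comm]
  · ext a i
    have := hb (Fin.castLE h i) (by simp)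
    simp [this, w]

lemma transit (n m : ℕ) (h : m ≤ n) (v w : Matrix (Fin n) (Fin m) ℝ) (hv : vᵀ * v = 1)
    (hw : wᵀ * w = 1) : ∃ g : Matrix (Fin n) (Fin n) ℝ, gᵀ * g = 1 ∧ g * v = w := by
  obtain ⟨V, hV, hVv⟩ := ext_basis n m h v hv
  obtain ⟨W, hW, hWw⟩ := ext_basis n m h w hw
  have hV2 : V * Vᵀ = 1 := mul_eq_one_comm.1 hV
  refine ⟨W * Vᵀ, ?_, ?_⟩
  · rw [Matrix.transpose_mul, Matrix.transpose_transpose, Matrix.mul_assoc, ← Matrix.mul_assoc Wᵀ,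
      hW, Matrix.one_mul, hV2]
  · rw [← hVv, ← hWw]
    have : W * Vᵀ * V = W := by rw [Matrix.mul_assoc, hV, Matrix.mul_one]
    conv_rhs => rw [← this]
    rfl

open scoped MatrixOrder in
lemma factor (n m : ℕ) (X : Matrix (Fin n) (Fin m) ℝ) (hX : 0 < (Xᵀ * X).det) :
    ∃ (v : Matrix (Fin n) (Fin m) ℝ) (B : Matrix (Fin m) (Fin m) ℝ),
      vᵀ * v = 1 ∧ X = v * B ∧ B.det ≠ 0 := by
  have hp : (Xᴴ * X).PosSemidef := Matrix.posSemidef_conjTranspose_mul_self X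
  obtain ⟨B, hB⟩ := CStarAlgebra.nonneg_iff_eq_star_mul_self.mp hp.nonneg
  rw [Matrix.star_eq_conjTranspose] at hB
  simp only [Matrix.conjTranspose_eq_transpose_of_trivial] at hB
  have hd : B.det ≠ 0 := by
    intro h
    rw [hB] at hX
    simp [h] at hX
  have hu : IsUnit B.det := isUnit_iff_ne_zero.2 hd
  refine ⟨X * B⁻¹, B, ?_, ?_, hd⟩
  · rw [Matrix.transpose_mul, Matrix.mul_assoc, ← Matrix.mul_assoc Xᵀ, hB, Matrix.mul_assoc,
      Matrix.mul_nonsing_inv _ hu, Matrix.mul_one, ← Matrix.transpose_mul,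
      Matrix.mul_nonsing_inv _ hu, Matrix.transpose_one]
  · rw [Matrix.mul_assoc, Matrix.nonsing_inv_mul _ hu, Matrix.mul_one]

lemma D_nonneg (n m k : ℕ) (u : Matrix (Fin n) (Fin k) ℝ) (v : Matrix (Fin n) (Fin m) ℝ) :
    0 ≤ (vᵀ * u * uᵀ * v).det := by
  have : vᵀ * u * uᵀ * v = (uᵀ * v)ᴴ * (uᵀ * v) := by
    simp [Matrix.conjTranspose_eq_transpose_of_trivial, Matrix.transpose_mul, Matrix.mul_assoc]
  rw [this]
  exact (Matrix.posSemidef_conjTranspose_mul_self _).det_nonneg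

lemma stiefel_entry (n k : ℕ) (u : Matrix (Fin n) (Fin k) ℝ) (hu : uᵀ * u = 1) (a : Fin n) (i : Fin k) :
    |u a i| ≤ 1 := by
  have := congrFun (congrFun hu i) i
  simp only [Matrix.mul_apply, Matrix.transpose_apply, Matrix.one_apply_eq] at this
  have h2 : u a i * u a i ≤ 1 := by
    rw [← this]
    exact Finset.single_le_sum (f := fun a => u a i * u a i) (fun _ _ => mul_self_nonneg _) (Finset.mem_univ a)
  rw [← sq_le_one_iff_abs_le_one]
  nlinarith

lemma D_bdd (n m k : ℕ) : ∃ M : ℝ, 1 ≤ M ∧ ∀ (u : Matrix (Fin n) (Fin k) ℝ) (v : Matrix (Fin n) (Fin m) ℝ),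
    uᵀ * u = 1 → vᵀ * v = 1 → (vᵀ * u * uᵀ * v).det ≤ M := by
  refine ⟨max 1 ((Fintype.card (Fin m)).factorial • (∑ _a : Fin n, ∑ _b : Fin k, ∑ _c : Fin n, (1:ℝ)) ^ Fintype.card (Fin m)), le_max_left _ _, ?_⟩
  intro u v hu hv
  refine le_trans (le_trans (le_abs_self _) ?_) (le_max_right _ _)
  refine Matrix.det_le (abv := AbsoluteValue.abs) ?_
  intro i j
  simp only [AbsoluteValue.abs_apply, Matrix.mul_apply, Matrix.transpose_apply, Finset.sum_mul]
  refine (Finset.abs_sum_le_sum_abs _ _).trans (Finset.sum_le_sum fun a _ => ?_)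
  refine (Finset.abs_sum_le_sum_abs _ _).trans (Finset.sum_le_sum fun b _ => ?_)
  refine (Finset.abs_sum_le_sum_abs _ _).trans (Finset.sum_le_sum fun c _ => ?_)
  simp only [abs_mul]
  have := stiefel_entry n k u hu
  have := stiefel_entry n m v hv
  have hh : ∀ p q : ℝ, 0 ≤ p → 0 ≤ q → p ≤ 1 → q ≤ 1 → p * q ≤ 1 := fun p q h1 h2 h3 h4 => by nlinarith
  apply hh _ _ (by positivity) (by positivity) _ (by simp [*])
  apply hh _ _ (by positivity) (by positivity) _ (by simp [*])
  apply hh _ _ (by positivity) (by positivity) (by simp [*]) (by simp [*])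

lemma finite_neg (n m k : ℕ) (h2 : m ≤ k) (h3 : k ≤ n)
    (μ : Measure {u : Matrix (Fin n) (Fin k) ℝ // uᵀ * u = 1}) [IsProbabilityMeasure μ]
    (hμ : ∀ g : Matrix (Fin n) (Fin n) ℝ, ∀ hg : gᵀ * g = 1,
      μ.map (fun u => (⟨g * u.1, by
        rw [Matrix.transpose_mul, Matrix.mul_assoc, ← Matrix.mul_assoc gᵀ, hg,
          Matrix.one_mul, u.2]⟩ : {u : Matrix (Fin n) (Fin k) ℝ // uᵀ * u = 1})) = μ)
    (v₀ : Matrix (Fin n) (Fin m) ℝ) (hv₀ : v₀ᵀ * v₀ = 1)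
    (r : ℝ) (hr : r < 0) (hlam : (m : ℝ) - k - 1 < r) :
    ∃ C : ℝ≥0∞, C < ⊤ ∧ ∀ v : Matrix (Fin n) (Fin m) ℝ, vᵀ * v = 1 →
      ∫⁻ u, ENNReal.ofReal ((vᵀ * u.1 * u.1ᵀ * v).det ^ (r / 2)) ∂μ ≤ C := by
  set h : Matrix (Fin n) (Fin m) ℝ → ℝ≥0∞ := fun v =>
    ∫⁻ u, ENNReal.ofReal ((vᵀ * u.1 * u.1ᵀ * v).det ^ (r / 2)) ∂μ with hh
  have hinv : ∀ (g : Matrix (Fin n) (Fin n) ℝ), gᵀ * g = 1 → ∀ v, h (g * v) = h v := by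
    intro g hg v
    simp only [hh]
    conv_lhs => rw [← hμ g hg]
    rw [lintegral_map]
    · refine lintegral_congr fun u => ?_
      have : (g * v)ᵀ * (g * u.1) * (g * u.1)ᵀ * (g * v) = vᵀ * u.1 * u.1ᵀ * v := by
        simp only [Matrix.transpose_mul]
        calc _ = vᵀ * (gᵀ * g) * u.1 * u.1ᵀ * (gᵀ * g) * v := by simp only [Matrix.mul_assoc]
          _ = _ := by rw [hg]; simp only [Matrix.mul_one]
      simp only [this]
    · exact meas_DE n m k r (fun u : {u : Matrix (Fin n) (Fin k) ℝ // uᵀ * u = 1} => u.1) (fun _ => g * v) measurable_subtype_coe measurable_const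
    · exact ((meas_mulLeft n k g).comp measurable_subtype_coe).subtype_mk
  have hconst : ∀ v w, vᵀ * v = 1 → wᵀ * w = 1 → h v = h w := by
    intro v w hv hw
    obtain ⟨g, hg, rfl⟩ := transit n m (h2.trans h3) v w hv hw
    rw [hinv g hg]
  suffices hex : ∃ v, vᵀ * v = 1 ∧ h v < ⊤ by
    obtain ⟨v, hv, hvt⟩ := hex
    exact ⟨h v, hvt, fun w hw => (hconst w v hw hv).le⟩
  obtain ⟨C, hCt, hC⟩ := base n ((k:ℝ) - m + 1) r hr (by linarith)
  set β : Measure (Fin n → ℝ) := volume.restrict (Bset n) with hβ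
  let mat : (Fin m → Fin n → ℝ) → Matrix (Fin n) (Fin m) ℝ := fun x => Matrix.of fun a i => x i a
  have hmat : Measurable mat := by
    refine measurable_pi_lambda _ fun a => measurable_pi_lambda _ fun i => ?_
    simp only [mat, Matrix.of_apply]
    fun_prop
  have hgram : ∀ (u : Matrix (Fin n) (Fin k) ℝ) (x : Fin m → Fin n → ℝ),
      (mat x)ᵀ * u * uᵀ * mat x = Matrix.of fun i j => x i ⬝ᵥ (u * uᵀ) *ᵥ x j := by
    intro u x
    rw [Matrix.mul_assoc, Matrix.mul_assoc, ← Matrix.mul_assoc u]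
    ext i j
    simp only [Matrix.mul_apply, dotProduct, Matrix.mulVec, mat, Matrix.of_apply, Matrix.transpose_apply]
  have hFx : Measurable (Function.uncurry fun (x : Fin m → Fin n → ℝ) (u : {u : Matrix (Fin n) (Fin k) ℝ // uᵀ * u = 1}) =>
      ENNReal.ofReal (((mat x)ᵀ * u.1 * u.1ᵀ * mat x).det ^ (r / 2))) :=
    meas_DE n m k r (fun p : (Fin m → Fin n → ℝ) × {u : Matrix (Fin n) (Fin k) ℝ // uᵀ * u = 1} => p.2.1) (fun p => mat p.1)
      (measurable_subtype_coe.comp measurable_snd) (hmat.comp measurable_fst)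
  have hint : ∫⁻ x, h (mat x) ∂(Measure.pi fun _ : Fin m => β) ≤ C ^ m := by
    simp only [hh]
    rw [lintegral_lintegral_swap hFx.aemeasurable]
    calc _ ≤ ∫⁻ _u, C ^ m ∂μ := by
          refine lintegral_mono fun u => ?_
          simp only [hgram]
          refine ind n ((k:ℝ) - m + 1) r hr C hC m (u.1 * u.1ᵀ) ?_ ?_ ?_
          · simp
          · rw [Matrix.mul_assoc, ← Matrix.mul_assoc u.1ᵀ, u.2, Matrix.one_mul]
          · rw [Matrix.trace_mul_comm, u.2, Matrix.trace_one]
            simp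
      _ = C ^ m := by simp
  have hlt : ∀ᵐ x ∂(Measure.pi fun _ : Fin m => β), h (mat x) < ⊤ :=
    ae_lt_top' (Measurable.lintegral_prod_right hFx).aemeasurable
      (hint.trans_lt (ENNReal.pow_lt_top hCt)).ne
  set O : Set (Fin m → Fin n → ℝ) := (Set.univ.pi fun _ => Bset n) ∩ {x | 0 < ((mat x)ᵀ * mat x).det} with hO
  have hOo : IsOpen O := by
    refine (isOpen_set_pi Set.finite_univ fun _ _ => Bset_open n).inter ?_
    refine isOpen_lt continuous_const ?_
    apply Continuous.matrix_det
    refine continuous_matrix fun i j => ?_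
    simp only [mat, Matrix.mul_apply, Matrix.transpose_apply, Matrix.of_apply]
    fun_prop
  have hmv : mat (fun i a => v₀ a i) = v₀ := rfl
  have hOn : O.Nonempty := by
    refine ⟨fun i a => v₀ a i, ?_, ?_⟩
    · intro i _
      have := congrFun (congrFun hv₀ i) i
      simp only [Matrix.mul_apply, Matrix.transpose_apply, Matrix.one_apply_eq] at this
      change (∑ a, v₀ a i * v₀ a i) < 4
      rw [this]; norm_num
    · change 0 < ((mat (fun i a => v₀ a i))ᵀ * mat (fun i a => v₀ a i)).det
      rw [hmv, hv₀]; simp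
  have hOpos : (Measure.pi fun _ : Fin m => β) O ≠ 0 := by
    rw [hβ, ← Measure.restrict_pi_pi, Measure.restrict_apply hOo.measurableSet,
      Set.inter_eq_left.2 Set.inter_subset_left]
    exact hOo.measure_ne_zero _ hOn
  obtain ⟨x, hxO, hx⟩ : ∃ x ∈ O, h (mat x) < ⊤ := by
    by_contra hcon
    push Not at hcon
    refine hOpos (measure_mono_null (fun x hx => ?_) (ae_iff.1 hlt))
    exact not_lt.2 (hcon x hx)
  obtain ⟨v, B, hv, hX, hB⟩ := factor n m (mat x) hxO.2
  refine ⟨v, hv, ?_⟩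
  have hBp : 0 < B.det ^ 2 := by positivity
  have hscale : h (mat x) = ENNReal.ofReal ((B.det ^ 2) ^ (r/2)) * h v := by
    simp only [hh]
    rw [← lintegral_const_mul' _ _ ENNReal.ofReal_ne_top]
    refine lintegral_congr fun u => ?_
    rw [← ENNReal.ofReal_mul (by positivity), ← Real.mul_rpow hBp.le (D_nonneg n m k _ _)]
    congr 2
    have : (v * B)ᵀ * u.1 * u.1ᵀ * (v * B) = Bᵀ * (vᵀ * u.1 * u.1ᵀ * v) * B := by
      simp only [Matrix.transpose_mul, Matrix.mul_assoc]
    rw [hX, this, Matrix.det_mul, Matrix.det_mul, Matrix.det_transpose]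
    ring
  rw [hscale] at hx
  by_contra hcon
  have : h v = ⊤ := not_lt_top_iff.1 hcon
  rw [this, ENNReal.mul_top] at hx
  · exact lt_irrefl _ hx
  · have : 0 < (B.det ^ 2) ^ (r/2) := Real.rpow_pos_of_pos hBp _
    simpa using this

/-- Convergence a.e. of the higher-rank cosine transform: if `f ∈ L¹(V_{n,m})` and
`Re λ > m - k - 1`, then `∫_{V_{n,m}} f(v) |uᵀv|_m^λ dv` converges (absolutely) for
almost all `u ∈ V_{n,k}`. The Stiefel manifolds are realized as subtypes of matrices,
with their `O(n)`-invariant probability measures. -/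
theorem cosine_transform_ae_convergent (n m k : ℕ) (h1 : 1 ≤ m) (h2 : m ≤ k)
    (h3 : k ≤ n - 1)
    (ν : Measure {v : Matrix (Fin n) (Fin m) ℝ // vᵀ * v = 1})
    (μ : Measure {u : Matrix (Fin n) (Fin k) ℝ // uᵀ * u = 1})
    [IsProbabilityMeasure ν] [IsProbabilityMeasure μ]
    (hν : ∀ g : Matrix (Fin n) (Fin n) ℝ, ∀ hg : gᵀ * g = 1,
      ν.map (fun v => (⟨g * v.1, by
        rw [Matrix.transpose_mul, Matrix.mul_assoc, ← Matrix.mul_assoc gᵀ, hg,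
          Matrix.one_mul, v.2]⟩ : {v : Matrix (Fin n) (Fin m) ℝ // vᵀ * v = 1})) = ν)
    (hμ : ∀ g : Matrix (Fin n) (Fin n) ℝ, ∀ hg : gᵀ * g = 1,
      μ.map (fun u => (⟨g * u.1, by
        rw [Matrix.transpose_mul, Matrix.mul_assoc, ← Matrix.mul_assoc gᵀ, hg,
          Matrix.one_mul, u.2]⟩ : {u : Matrix (Fin n) (Fin k) ℝ // uᵀ * u = 1})) = μ)
    (f : {v : Matrix (Fin n) (Fin m) ℝ // vᵀ * v = 1} → ℂ) (hf : Integrable f ν)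
    (lam : ℂ) (hlam : (m : ℝ) - k - 1 < lam.re) :
    ∀ᵐ u ∂μ, Integrable
      (fun v : {v : Matrix (Fin n) (Fin m) ℝ // vᵀ * v = 1} =>
        f v * (((v.1ᵀ * u.1 * u.1ᵀ * v.1).det : ℂ) ^ (lam / 2))) ν := by
  have hkn : k ≤ n := h3.trans (Nat.sub_le n 1)
  have hmeas : Measurable (Function.uncurry
      fun (u : {u : Matrix (Fin n) (Fin k) ℝ // uᵀ * u = 1})
        (v : {v : Matrix (Fin n) (Fin m) ℝ // vᵀ * v = 1}) =>
        (((v.1ᵀ * u.1 * u.1ᵀ * v.1).det : ℂ) ^ (lam / 2))) := by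
    have h0 : Measurable fun p : {u : Matrix (Fin n) (Fin k) ℝ // uᵀ * u = 1} ×
        {v : Matrix (Fin n) (Fin m) ℝ // vᵀ * v = 1} =>
        (p.2.1ᵀ * p.1.1 * p.1.1ᵀ * p.2.1).det := 
      meas_D' n m k (fun p : {u : Matrix (Fin n) (Fin k) ℝ // uᵀ * u = 1} ×
        {v : Matrix (Fin n) (Fin m) ℝ // vᵀ * v = 1} => p.1.1) (fun p => p.2.1)
      (measurable_subtype_coe.comp measurable_fst) (measurable_subtype_coe.comp measurable_snd)
    have h1 : Measurable fun p : {u : Matrix (Fin n) (Fin k) ℝ // uᵀ * u = 1} ×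
        {v : Matrix (Fin n) (Fin m) ℝ // vᵀ * v = 1} =>
        (((p.2.1ᵀ * p.1.1 * p.1.1ᵀ * p.2.1).det : ℝ) : ℂ) := Complex.measurable_ofReal.comp h0
    exact h1.pow_const _
  have hre : (lam / 2).re = lam.re / 2 := by simp
  obtain ⟨C, hCt, hC⟩ : ∃ C : ℝ≥0∞, C < ⊤ ∧
      ∀ v : {v : Matrix (Fin n) (Fin m) ℝ // vᵀ * v = 1},
        ∫⁻ u, ‖(((v.1ᵀ * u.1 * u.1ᵀ * v.1).det : ℂ) ^ (lam / 2))‖ₑ ∂μ ≤ C := by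
    rcases lt_or_ge lam.re 0 with hneg | hpos
    · obtain ⟨v₀⟩ := ν.nonempty_of_neZero
      obtain ⟨C, hCt, hC⟩ := finite_neg n m k h2 hkn μ hμ v₀.1 v₀.2 lam.re hneg hlam
      refine ⟨C, hCt, fun v => le_trans (lintegral_mono fun u => ?_) (hC v.1 v.2)⟩
      rw [← ofReal_norm_eq_enorm]
      apply ENNReal.ofReal_le_ofReal
      rcases (D_nonneg n m k u.1 v.1).eq_or_lt with h0 | h0
      · have hl : lam / 2 ≠ 0 := by
          intro h
          rw [h] at hre
          simp at hre
          linarith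
        rw [← h0, Complex.ofReal_zero, Complex.zero_cpow hl, norm_zero]
        positivity
      · rw [Complex.norm_cpow_eq_rpow_re_of_pos h0, hre]
    · obtain ⟨M, hM1, hM⟩ := D_bdd n m k
      refine ⟨ENNReal.ofReal (M ^ (lam.re / 2)), ENNReal.ofReal_lt_top, fun v => ?_⟩
      calc _ ≤ ∫⁻ _u, ENNReal.ofReal (M ^ (lam.re / 2)) ∂μ := by
            refine lintegral_mono fun u => ?_
            rw [← ofReal_norm_eq_enorm]
            apply ENNReal.ofReal_le_ofReal
            rcases (D_nonneg n m k u.1 v.1).eq_or_lt with h0 | h0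
            · have h1' : (1:ℝ) ≤ M ^ (lam.re / 2) := Real.one_le_rpow hM1 (by linarith)
              rw [← h0, Complex.ofReal_zero]
              rcases eq_or_ne (lam / 2) 0 with hl | hl
              · rw [hl]; simpa using h1'
              · rw [Complex.zero_cpow hl, norm_zero]; linarith
            · rw [Complex.norm_cpow_eq_rpow_re_of_pos h0, hre]
              exact Real.rpow_le_rpow h0.le (hM u.1 v.1 u.2 v.2) (by linarith)
        _ = _ := by simp
  have hmeasE := hmeas.enorm
  have hfm : AEMeasurable (fun p : {u : Matrix (Fin n) (Fin k) ℝ // uᵀ * u = 1} ×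
        {v : Matrix (Fin n) (Fin m) ℝ // vᵀ * v = 1} => ‖f p.2‖ₑ) (μ.prod ν) :=
    hf.1.enorm.comp_quasiMeasurePreserving Measure.quasiMeasurePreserving_snd
  have hprod : AEMeasurable (Function.uncurry
      fun (u : {u : Matrix (Fin n) (Fin k) ℝ // uᵀ * u = 1})
        (v : {v : Matrix (Fin n) (Fin m) ℝ // vᵀ * v = 1}) =>
        ‖f v‖ₑ * ‖(((v.1ᵀ * u.1 * u.1ᵀ * v.1).det : ℂ) ^ (lam / 2))‖ₑ) (μ.prod ν) :=
    hfm.mul hmeasE.aemeasurable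
  have hfin : ∫⁻ u, ∫⁻ v, ‖f v‖ₑ * ‖(((v.1ᵀ * u.1 * u.1ᵀ * v.1).det : ℂ) ^ (lam / 2))‖ₑ ∂ν ∂μ
      ≠ ⊤ := by
    rw [lintegral_lintegral_swap hprod]
    refine ne_of_lt (lt_of_le_of_lt (b := ∫⁻ v, ‖f v‖ₑ * C ∂ν) ?_ ?_)
    · refine lintegral_mono fun v => ?_
      rw [lintegral_const_mul' _ _ enorm_ne_top]
      gcongr
      exact hC v
    · rw [lintegral_mul_const' _ _ hCt.ne]
      exact ENNReal.mul_lt_top hf.2 hCt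
  have hae := ae_lt_top' hprod.lintegral_prod_right' hfin
  filter_upwards [hae] with u hu
  refine ⟨hf.1.mul (hmeas.comp (measurable_const.prodMk measurable_id)).aestronglyMeasurable, ?_⟩
  rw [hasFiniteIntegral_iff_enorm]
  simp only [enorm_mul]
  exact hu
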